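/- arXiv:2006.16005 — 2 statements merged into one kernel-verified Lean document; each statement's English description precedes it below -/
import Mathlib

section
/- For every positive integer n, the number of ordered pairs (x,y) of positive integers with x^3 + y^3 = n equals (the number of positive divisors d of n with d^3 = 4n) plus twice (the number of pairs (d,k), where d is a positive divisor of n and k is a positive integer, such that d^2 + 3k^2 = 4(n/d), d ≡ k (mod 2), and d − k ≥ 2). -/
/-- The number of ordered pairs `(x, y)` of positive integers with `x³ + y³ = n` equals the
number of positive divisors `d` of `n` with `d³ = 4n`, plus twice the number of pairs `(d, k)`
with `d` a positive divisor of `n`, `k` a positive integer, `d² + 3k² = 4(n/d)`,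
`d ≡ k (mod 2)` and `d − k ≥ 2`. -/
theorem sum_two_pos_cubes_count (n : ℕ) (hn : 0 < n) :
    Set.ncard {p : ℕ × ℕ | 0 < p.1 ∧ 0 < p.2 ∧ p.1 ^ 3 + p.2 ^ 3 = n} =
      Set.ncard {d : ℕ | d ∣ n ∧ d ^ 3 = 4 * n} +
        2 * Set.ncard {dk : ℕ × ℕ | dk.1 ∣ n ∧ 0 < dk.2 ∧
          dk.1 ^ 2 + 3 * dk.2 ^ 2 = 4 * (n / dk.1) ∧ dk.1 % 2 = dk.2 % 2 ∧
          2 ≤ (dk.1 : ℤ) - (dk.2 : ℤ)} := by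
  set S : Set (ℕ × ℕ) := {p : ℕ × ℕ | 0 < p.1 ∧ 0 < p.2 ∧ p.1 ^ 3 + p.2 ^ 3 = n} with hS
  have hfin : S.Finite := by
    apply Set.Finite.subset (Set.finite_Iic ((n, n) : ℕ × ℕ))
    rintro ⟨x, y⟩ ⟨hx, hy, h⟩
    simp only at hx hy h
    have h1 : x ≤ x ^ 3 := Nat.le_self_pow (by norm_num) x
    have h2 : y ≤ y ^ 3 := Nat.le_self_pow (by norm_num) y
    exact Prod.mk_le_mk.2 ⟨by omega, by omega⟩
  set A : Set (ℕ × ℕ) := {p | p ∈ S ∧ p.1 = p.2} with hA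
  set B : Set (ℕ × ℕ) := {p | p ∈ S ∧ p.2 < p.1} with hB
  set C : Set (ℕ × ℕ) := {p | p ∈ S ∧ p.1 < p.2} with hC
  have hAf : A.Finite := hfin.subset fun p hp => hp.1
  have hBf : B.Finite := hfin.subset fun p hp => hp.1
  have hCf : C.Finite := hfin.subset fun p hp => hp.1
  have hSU : S = A ∪ (B ∪ C) := by
    ext p
    simp only [hA, hB, hC, Set.mem_union, Set.mem_setOf_eq]
    have := lt_trichotomy p.1 p.2
    tauto
  have hd1 : Disjoint B C := by
    rw [Set.disjoint_left]
    rintro p ⟨_, h1⟩ ⟨_, h2⟩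
    omega
  have hd2 : Disjoint A (B ∪ C) := by
    rw [Set.disjoint_left]
    rintro p ⟨_, h1⟩ (⟨_, h2⟩ | ⟨_, h2⟩) <;> omega
  have hCB : C.ncard = B.ncard := by
    have : C = Prod.swap '' B := by
      ext ⟨x, y⟩
      simp only [hB, hC, hS, Set.mem_image, Set.mem_setOf_eq, Prod.exists, Prod.swap_prod_mk,
        Prod.mk.injEq]
      constructor
      · rintro ⟨⟨h1, h2, h3⟩, h4⟩
        exact ⟨y, x, ⟨⟨h2, h1, by omega⟩, h4⟩, rfl, rfl⟩
      · rintro ⟨a, b, ⟨⟨h1, h2, h3⟩, h4⟩, rfl, rfl⟩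
        exact ⟨⟨h2, h1, by omega⟩, h4⟩
    rw [this, Set.ncard_image_of_injective _ Prod.swap_injective]
  have hDA : Set.ncard {d : ℕ | d ∣ n ∧ d ^ 3 = 4 * n} = A.ncard := by
    have : {d : ℕ | d ∣ n ∧ d ^ 3 = 4 * n} = (fun p : ℕ × ℕ => p.1 + p.2) '' A := by
      ext d
      simp only [hA, hS, Set.mem_image, Set.mem_setOf_eq, Prod.exists]
      constructor
      · rintro ⟨_, h⟩
        have he : Even d := by
          have : Even (d ^ 3) := by rw [h]; exact ⟨2 * n, by ring⟩
          exact (Nat.even_pow.1 this).1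
        obtain ⟨m, rfl⟩ := he
        have h3 : m ^ 3 + m ^ 3 = n := by
          have : (m + m) ^ 3 = 4 * (m ^ 3 + m ^ 3) := by ring
          omega
        have hm : 0 < m := by
          rcases Nat.eq_zero_or_pos m with rfl | hm
          · simp at h3; omega
          · exact hm
        exact ⟨m, m, ⟨⟨hm, hm, h3⟩, rfl⟩, rfl⟩
      · rintro ⟨a, b, ⟨⟨h1, h2, h3⟩, h4⟩, rfl⟩
        subst h4
        exact ⟨⟨a ^ 2, by rw [← h3]; ring⟩, by rw [← h3]; ring⟩
    rw [this, Set.ncard_image_of_injOn]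
    rintro ⟨a, b⟩ ⟨_, h⟩ ⟨c, d⟩ ⟨_, h'⟩ he
    simp only at h h' he
    ext <;> simp only <;> omega
  have hKB : Set.ncard {dk : ℕ × ℕ | dk.1 ∣ n ∧ 0 < dk.2 ∧
          dk.1 ^ 2 + 3 * dk.2 ^ 2 = 4 * (n / dk.1) ∧ dk.1 % 2 = dk.2 % 2 ∧
          2 ≤ (dk.1 : ℤ) - (dk.2 : ℤ)} = B.ncard := by
    have : {dk : ℕ × ℕ | dk.1 ∣ n ∧ 0 < dk.2 ∧
          dk.1 ^ 2 + 3 * dk.2 ^ 2 = 4 * (n / dk.1) ∧ dk.1 % 2 = dk.2 % 2 ∧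
          2 ≤ (dk.1 : ℤ) - (dk.2 : ℤ)} = (fun p : ℕ × ℕ => (p.1 + p.2, p.1 - p.2)) '' B := by
      ext ⟨d, k⟩
      simp only [hB, hS, Set.mem_image, Set.mem_setOf_eq, Prod.exists, Prod.mk.injEq]
      constructor
      · rintro ⟨⟨c, hc⟩, hk, h, hmod, hle⟩
        obtain ⟨y, rfl⟩ : ∃ y, d = 2 * y + k := ⟨(d - k) / 2, by omega⟩
        rw [hc, Nat.mul_div_cancel_left _ (by omega)] at h
        have hcc : c = y ^ 2 + y * k + k ^ 2 := by nlinarith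
        refine ⟨y + k, y, ⟨⟨by omega, by omega, ?_⟩, by omega⟩, by omega, by omega⟩
        rw [hc, hcc]; ring
      · rintro ⟨x, y, ⟨⟨h1, h2, h3⟩, h4⟩, rfl, rfl⟩
        obtain ⟨k, rfl⟩ : ∃ k, x = y + k := ⟨x - y, by omega⟩
        have hc : n = (y + k + y) * (y ^ 2 + y * k + k ^ 2) := by rw [← h3]; ring
        have hk : y + k - y = k := by omega
        rw [hk]
        refine ⟨⟨_, hc⟩, by omega, ?_, by omega, by push_cast; omega⟩
        rw [hc, Nat.mul_div_cancel_left _ (by omega)]; ring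
    rw [this, Set.ncard_image_of_injOn]
    rintro ⟨a, b⟩ ⟨_, h⟩ ⟨c, d⟩ ⟨_, h'⟩ he
    simp only [Prod.mk.injEq] at h h' he
    ext <;> simp only <;> omega
  rw [hDA, hKB, hSU, Set.ncard_union_eq hd2 hAf (hBf.union hCf), Set.ncard_union_eq hd1 hBf hCf,
    hCB]
  ring
end

section
/- For every positive integer n, the number of ordered pairs (x,y) of integers with x^3 + y^3 = n equals (the number of positive divisors d of n with d^3 = 4n) plus twice (the number of pairs (d,k), where d is a positive divisor of n and k is a positive integer, such that d^2 + 3k^2 = 4(n/d) and d ≡ k (mod 2)). -/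
theorem aux_mem2 (n d k : ℕ) (hn : 0 < n) :
    (d ∣ n ∧ 0 < k ∧ d ^ 2 + 3 * k ^ 2 = 4 * (n / d) ∧ d % 2 = k % 2) ↔
    ∃ x y : ℤ, x ^ 3 + y ^ 3 = n ∧ y < x ∧ (d : ℤ) = x + y ∧ (k : ℤ) = x - y := by
  constructor
  · rintro ⟨⟨m, rfl⟩, hk, h, hp⟩
    have hd : 0 < d := Nat.pos_of_mul_pos_right hn
    rw [Nat.mul_div_cancel_left _ hd] at h
    obtain ⟨x, hx⟩ : ∃ x : ℤ, (d : ℤ) + k = 2 * x := ⟨((d : ℤ) + k) / 2, by omega⟩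
    have hk' : (k : ℤ) = 2 * x - d := by linarith
    refine ⟨x, d - x, ?_, by omega, by ring, by linarith⟩
    have h' : (d : ℤ) ^ 2 + 3 * (k : ℤ) ^ 2 = 4 * m := by exact_mod_cast h
    rw [hk'] at h'
    push_cast
    have h4 : (4 : ℤ) * (x ^ 3 + (d - x) ^ 3) = 4 * (d * m) := by
      linear_combination (d : ℤ) * h'
    linarith
  · rintro ⟨x, y, h, hxy, hd, hk⟩
    have hf : (n : ℤ) = d * (x ^ 2 - x * y + y ^ 2) := by rw [hd, ← h]; ring
    have hm : 0 ≤ x ^ 2 - x * y + y ^ 2 := by nlinarith [sq_nonneg (x - y), sq_nonneg (x + y)]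
    obtain ⟨m, hm⟩ := Int.eq_ofNat_of_zero_le hm
    rw [hm] at hf
    have hf' : n = d * m := by exact_mod_cast hf
    subst hf'
    have hd0 : 0 < d := Nat.pos_of_mul_pos_right hn
    refine ⟨⟨m, rfl⟩, by omega, ?_, by omega⟩
    rw [Nat.mul_div_cancel_left _ hd0]
    have : (d : ℤ) ^ 2 + 3 * (k : ℤ) ^ 2 = 4 * m := by
      rw [hd, hk, ← hm]; ring
    exact_mod_cast this

theorem aux_mem1 (n d : ℕ) :
    (d ∣ n ∧ d ^ 3 = 4 * n) ↔ ∃ x : ℤ, x ^ 3 + x ^ 3 = n ∧ (d : ℤ) = x + x := by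
  constructor
  · rintro ⟨-, h⟩
    have he : 2 ∣ d := by
      apply Nat.prime_two.dvd_of_dvd_pow (n := 3)
      omega
    obtain ⟨x, rfl⟩ := he
    refine ⟨x, ?_, by push_cast; ring⟩
    have h' : ((2 * x : ℕ) : ℤ) ^ 3 = 4 * n := by exact_mod_cast h
    push_cast at h'
    linarith [mul_pow (2 : ℤ) x 3]
  · rintro ⟨x, h, hd⟩
    constructor
    · have : (d : ℤ) ∣ n := ⟨x ^ 2, by rw [hd, ← h]; ring⟩
      exact_mod_cast this
    · have : (d : ℤ) ^ 3 = 4 * n := by rw [hd, ← h]; ring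
      exact_mod_cast this

theorem aux_pos (n : ℕ) (hn : 0 < n) (x y : ℤ) (h : x ^ 3 + y ^ 3 = n) : 0 < x + y := by
  by_contra hc
  have hf : (x + y) * (x ^ 2 - x * y + y ^ 2) = n := by rw [← h]; ring
  have hm : 0 ≤ x ^ 2 - x * y + y ^ 2 := by nlinarith [sq_nonneg (x - y), sq_nonneg (x + y)]
  have : (0 : ℤ) < n := by exact_mod_cast hn
  nlinarith

/-- The number of ordered pairs `(x, y)` of integers with `x³ + y³ = n` equals the number of
positive divisors `d` of `n` with `d³ = 4n`, plus twice the number of pairs `(d, k)` with `d` a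
positive divisor of `n`, `k` a positive integer, `d² + 3k² = 4(n/d)` and `d ≡ k (mod 2)`. -/
theorem sum_two_int_cubes_count (n : ℕ) (hn : 0 < n) :
    Set.ncard {p : ℤ × ℤ | p.1 ^ 3 + p.2 ^ 3 = (n : ℤ)} =
      Set.ncard {d : ℕ | d ∣ n ∧ d ^ 3 = 4 * n} +
        2 * Set.ncard {dk : ℕ × ℕ | dk.1 ∣ n ∧ 0 < dk.2 ∧
          dk.1 ^ 2 + 3 * dk.2 ^ 2 = 4 * (n / dk.1) ∧ dk.1 % 2 = dk.2 % 2} := by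
  set S := {d : ℕ | d ∣ n ∧ d ^ 3 = 4 * n} with hS
  set T := {dk : ℕ × ℕ | dk.1 ∣ n ∧ 0 < dk.2 ∧
          dk.1 ^ 2 + 3 * dk.2 ^ 2 = 4 * (n / dk.1) ∧ dk.1 % 2 = dk.2 % 2} with hT
  have fS : S.Finite := (Set.finite_Iic n).subset fun d hd => Nat.le_of_dvd hn hd.1
  have fT : T.Finite := by
    refine ((Set.finite_Iic n).prod (Set.finite_Iic (4 * n))).subset ?_
    rintro ⟨d, k⟩ ⟨h1, h2, h3, -⟩
    refine ⟨Nat.le_of_dvd hn h1, ?_⟩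
    have := Nat.div_le_self n d
    simp only [Set.mem_Iic] at *
    nlinarith
  let f : ℕ → ℤ × ℤ := fun d => ((d : ℤ) / 2, (d : ℤ) / 2)
  let g : ℕ × ℕ → ℤ × ℤ := fun q => (((q.1 : ℤ) + q.2) / 2, ((q.1 : ℤ) - q.2) / 2)
  let g' : ℕ × ℕ → ℤ × ℤ := fun q => (((q.1 : ℤ) - q.2) / 2, ((q.1 : ℤ) + q.2) / 2)
  have e1 : f '' S = {p : ℤ × ℤ | p.1 ^ 3 + p.2 ^ 3 = (n : ℤ) ∧ p.1 = p.2} := by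
    ext ⟨x, y⟩
    constructor
    · rintro ⟨d, hd, he⟩
      obtain ⟨z, hz, hdz⟩ := (aux_mem1 n d).1 hd
      simp only [f, Prod.mk.injEq] at he
      obtain rfl : x = z := by omega
      obtain rfl : y = x := by omega
      exact ⟨hz, rfl⟩
    · rintro ⟨h, he⟩
      simp only at h he
      subst he
      have := aux_pos n hn _ _ h
      refine ⟨(x + x).toNat, (aux_mem1 n _).2 ⟨x, h, by omega⟩, ?_⟩
      simp only [f, Prod.mk.injEq]
      omega
  have e2 : g '' T = {p : ℤ × ℤ | p.1 ^ 3 + p.2 ^ 3 = (n : ℤ) ∧ p.2 < p.1} := by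
    ext ⟨x, y⟩
    constructor
    · rintro ⟨⟨d, k⟩, hd, he⟩
      obtain ⟨z, w, hz, hlt, h1, h2⟩ := (aux_mem2 n d k hn).1 hd
      simp only [g, Prod.mk.injEq] at he
      obtain rfl : x = z := by omega
      obtain rfl : y = w := by omega
      exact ⟨hz, hlt⟩
    · rintro ⟨h, he⟩
      simp only at h he
      have := aux_pos n hn _ _ h
      refine ⟨((x + y).toNat, (x - y).toNat),
        (aux_mem2 n _ _ hn).2 ⟨x, y, h, he, by omega, by omega⟩, ?_⟩
      simp only [g, Prod.mk.injEq]
      omega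
  have e3 : g' '' T = {p : ℤ × ℤ | p.1 ^ 3 + p.2 ^ 3 = (n : ℤ) ∧ p.1 < p.2} := by
    have : g' = Prod.swap ∘ g := rfl
    rw [this, Set.image_comp, e2, Set.image_swap_eq_preimage_swap]
    ext ⟨x, y⟩
    simp [add_comm]
  have i1 : Set.InjOn f S := by
    intro a ha b hb h
    obtain ⟨x, -, hx⟩ := (aux_mem1 n a).1 ha
    obtain ⟨y, -, hy⟩ := (aux_mem1 n b).1 hb
    simp only [f, Prod.mk.injEq] at h
    omega
  have i2 : Set.InjOn g T := by
    rintro ⟨a, b⟩ ⟨-, -, -, h1⟩ ⟨c, d⟩ ⟨-, -, -, h2⟩ h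
    simp only [g, Prod.mk.injEq] at *
    omega
  have i3 : Set.InjOn g' T := by
    rintro ⟨a, b⟩ ⟨-, -, -, h1⟩ ⟨c, d⟩ ⟨-, -, -, h2⟩ h
    simp only [g', Prod.mk.injEq] at *
    omega
  have eU : {p : ℤ × ℤ | p.1 ^ 3 + p.2 ^ 3 = (n : ℤ)} = f '' S ∪ (g '' T ∪ g' '' T) := by
    rw [e1, e2, e3]
    ext ⟨x, y⟩
    simp only [Set.mem_setOf_eq, Set.mem_union]
    have := lt_trichotomy x y
    tauto
  have d2 : Disjoint (g '' T) (g' '' T) := by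
    rw [e2, e3, Set.disjoint_left]
    rintro p ⟨-, h⟩ ⟨-, h'⟩
    omega
  have d1 : Disjoint (f '' S) (g '' T ∪ g' '' T) := by
    rw [e1, e2, e3, Set.disjoint_left]
    rintro p ⟨-, h⟩ (⟨-, h'⟩ | ⟨-, h'⟩) <;> omega
  rw [eU, Set.ncard_union_eq d1 (fS.image f) ((fT.image g).union (fT.image g')),
    Set.ncard_union_eq d2 (fT.image g) (fT.image g'), Set.ncard_image_of_injOn i1,
    Set.ncard_image_of_injOn i2, Set.ncard_image_of_injOn i3]
  ring
end
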